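/- arXiv:2503.16754 — 10 statements merged into one kernel-verified Lean document; each statement's English description precedes it below -/
import Mathlib

section
/- Consider one Consensus ALADIN iteration with constant matrices for the consensus problem. Suppose each f_i is differentiable and strictly convex, (z*, λ*) is a KKT point, and the input dual variables satisfy Σ_i λ_i = 0. Then the energy function does not increase, L(z⁺, λ⁺) ≤ L(z, λ); moreover, if x_j⁺ ≠ z* for at least one index j, the inequality is strict: L(z⁺, λ⁺) < L(z, λ). -/
open Matrix Finset

lemma sym_dot {n : ℕ} {B : Matrix (Fin n) (Fin n) ℝ} (hB : B.PosDef) (x y : Fin n → ℝ) :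
    x ⬝ᵥ (B *ᵥ y) = y ⬝ᵥ (B *ᵥ x) := by
  have h : Bᵀ = B := by simpa using hB.isHermitian.eq
  rw [dotProduct_mulVec, ← mulVec_transpose, h, dotProduct_comm]

lemma quad_id {n : ℕ} {B : Matrix (Fin n) (Fin n) ℝ} (hB : B.PosDef) (a b u d : Fin n → ℝ) :
    ((B *ᵥ (a - u) - d) ⬝ᵥ (B⁻¹ *ᵥ (B *ᵥ (a - u) - d)) + a ⬝ᵥ (B *ᵥ a))
    - ((B *ᵥ (u - b) - d) ⬝ᵥ (B⁻¹ *ᵥ (B *ᵥ (u - b) - d)) + b ⬝ᵥ (B *ᵥ b))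
    = 4 * (d ⬝ᵥ u) + 2 * (a ⬝ᵥ (B *ᵥ (a - u) - d)) + 2 * (b ⬝ᵥ (B *ᵥ (u - b) - d)) := by
  have hdet : IsUnit B.det := hB.det_pos.ne'.isUnit
  obtain ⟨c, rfl⟩ : ∃ c, d = B *ᵥ c := ⟨B⁻¹ *ᵥ d, by
    rw [mulVec_mulVec, mul_nonsing_inv _ hdet, one_mulVec]⟩
  rw [← mulVec_sub, ← mulVec_sub, mulVec_mulVec, mulVec_mulVec, nonsing_inv_mul _ hdet,
    one_mulVec, one_mulVec, dotProduct_comm (B *ᵥ _) (a - u - c),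
    dotProduct_comm (B *ᵥ _) (u - b - c), dotProduct_comm (B *ᵥ _) u]
  simp only [mulVec_sub, dotProduct_sub, sub_dotProduct]
  rw [sym_dot hB u a, sym_dot hB c a, sym_dot hB c u, sym_dot hB b u, sym_dot hB c b]
  ring

lemma foc {n : ℕ} {f : (Fin n → ℝ) → ℝ} {G : (Fin n → ℝ)} {x z l : Fin n → ℝ}
    {B : Matrix (Fin n) (Fin n) ℝ} (hB : B.PosDef)
    (hd : Differentiable ℝ f) (hG : ∀ y, fderiv ℝ f x y = G ⬝ᵥ y)
    (hmin : ∀ w, f x + l ⬝ᵥ x + (1 / 2 : ℝ) * ((x - z) ⬝ᵥ (B *ᵥ (x - z)))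
        ≤ f w + l ⬝ᵥ w + (1 / 2 : ℝ) * ((w - z) ⬝ᵥ (B *ᵥ (w - z)))) :
    G = B *ᵥ (z - x) - l := by
  have key : ∀ y, G ⬝ᵥ y + l ⬝ᵥ y + y ⬝ᵥ (B *ᵥ (x - z)) = 0 := by
    intro y
    have h1 : HasDerivAt (fun t : ℝ => x + t • y) y 0 := by
      simpa using ((hasDerivAt_id (0 : ℝ)).smul_const y).const_add x
    have h2 : HasDerivAt (fun t : ℝ => f (x + t • y)) (G ⬝ᵥ y) 0 := by
      rw [← hG]
      have := (hd (x + (0 : ℝ) • y)).hasFDerivAt.comp_hasDerivAt (0 : ℝ) h1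
      simpa [Function.comp_def] using this
    have h3 : HasDerivAt (fun t : ℝ => l ⬝ᵥ x + t * (l ⬝ᵥ y) + ((1 / 2 : ℝ) *
        ((x - z) ⬝ᵥ (B *ᵥ (x - z))) + t * (y ⬝ᵥ (B *ᵥ (x - z)))
          + t ^ 2 * ((1 / 2 : ℝ) * (y ⬝ᵥ (B *ᵥ y)))))
        (l ⬝ᵥ y + y ⬝ᵥ (B *ᵥ (x - z))) 0 := by
      have i1 := ((hasDerivAt_id (0 : ℝ)).mul_const (l ⬝ᵥ y)).const_add (l ⬝ᵥ x)
      have i2 := ((hasDerivAt_id (0 : ℝ)).mul_const (y ⬝ᵥ (B *ᵥ (x - z)))).const_add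
        ((1 / 2 : ℝ) * ((x - z) ⬝ᵥ (B *ᵥ (x - z))))
      have i3 := ((hasDerivAt_id (0 : ℝ)).pow 2).mul_const ((1 / 2 : ℝ) * (y ⬝ᵥ (B *ᵥ y)))
      have := i1.add (i2.add i3)
      refine this.congr_deriv ?_
      simp
    have h4 := h2.add h3
    have hm : IsLocalMin (fun t : ℝ => f (x + t • y) + (l ⬝ᵥ x + t * (l ⬝ᵥ y) + ((1 / 2 : ℝ) *
        ((x - z) ⬝ᵥ (B *ᵥ (x - z))) + t * (y ⬝ᵥ (B *ᵥ (x - z)))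
          + t ^ 2 * ((1 / 2 : ℝ) * (y ⬝ᵥ (B *ᵥ y)))))) (0 : ℝ) := by
      refine Filter.Eventually.of_forall ?_
      intro t
      have e := hmin (x + t • y)
      have e2 : (x + t • y - z) ⬝ᵥ (B *ᵥ (x + t • y - z)) = (x - z) ⬝ᵥ (B *ᵥ (x - z))
          + 2 * t * (y ⬝ᵥ (B *ᵥ (x - z))) + t ^ 2 * (y ⬝ᵥ (B *ᵥ y)) := by
        rw [show x + t • y - z = (x - z) + t • y by abel]
        simp only [mulVec_add, mulVec_smul, dotProduct_add, add_dotProduct, dotProduct_smul,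
          smul_dotProduct, smul_eq_mul]
        rw [sym_dot hB (x - z) y]
        ring
      rw [e2, dotProduct_add, dotProduct_smul, smul_eq_mul] at e
      simp only [zero_smul, add_zero]
      linarith
    have := hm.hasDerivAt_eq_zero h4
    linarith
  have : G + l + B *ᵥ (x - z) = 0 := by
    apply dotProduct_eq_zero
    intro y
    have := key y
    rw [add_dotProduct, add_dotProduct, dotProduct_comm (B *ᵥ _) y]
    exact this
  have e : B *ᵥ (z - x) = - (B *ᵥ (x - z)) := by rw [← mulVec_neg, neg_sub]
  rw [e]
  linear_combination (exp := 1) this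

lemma first_order {n : ℕ} {f : (Fin n → ℝ) → ℝ} {G x : (Fin n → ℝ)}
    (hd : Differentiable ℝ f) (hG : ∀ y, fderiv ℝ f x y = G ⬝ᵥ y)
    (hc : ConvexOn ℝ Set.univ f) (y : Fin n → ℝ) : f x + G ⬝ᵥ (y - x) ≤ f y := by
  have hc' := hc.comp_affineMap (AffineMap.lineMap x y : ℝ →ᵃ[ℝ] (Fin n → ℝ))
  have hder : HasDerivAt (f ∘ (AffineMap.lineMap x y : ℝ →ᵃ[ℝ] (Fin n → ℝ)))
      (G ⬝ᵥ (y - x)) 0 := by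
    rw [← hG]
    have h1 : HasDerivAt (AffineMap.lineMap x y : ℝ →ᵃ[ℝ] (Fin n → ℝ)) (y - x) (0 : ℝ) :=
      AffineMap.hasDerivAt_lineMap
    have := (hd _).hasFDerivAt.comp_hasDerivAt (0 : ℝ) h1
    simpa using this
  have := hc'.le_slope_of_hasDerivAt (x := 0) (y := 1) (by simp) (by simp) one_pos hder
  simp [slope_def_field] at this
  simp only [dotProduct_sub]
  linarith

lemma first_order_strict {n : ℕ} {f : (Fin n → ℝ) → ℝ} {G x : (Fin n → ℝ)}
    (hd : Differentiable ℝ f) (hG : ∀ y, fderiv ℝ f x y = G ⬝ᵥ y)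
    (hc : StrictConvexOn ℝ Set.univ f) (y : Fin n → ℝ) (hxy : x ≠ y) :
    f x + G ⬝ᵥ (y - x) < f y := by
  have h1 := first_order hd hG hc.convexOn ((1 / 2 : ℝ) • x + (1 / 2 : ℝ) • y)
  have h2 := hc.2 (Set.mem_univ x) (Set.mem_univ y) hxy
    (show (0 : ℝ) < 1 / 2 by norm_num) (show (0 : ℝ) < 1 / 2 by norm_num) (by norm_num)
  simp only [dotProduct_sub, dotProduct_add, dotProduct_smul, smul_eq_mul] at *
  linarith

lemma mono_strict {n : ℕ} {f : (Fin n → ℝ) → ℝ} {G : (Fin n → ℝ) → (Fin n → ℝ)}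
    (hd : Differentiable ℝ f) (hG : ∀ x y, fderiv ℝ f x y = G x ⬝ᵥ y)
    (hc : StrictConvexOn ℝ Set.univ f) (x y : Fin n → ℝ) (hxy : x ≠ y) :
    0 < (G x - G y) ⬝ᵥ (x - y) := by
  have h1 := first_order_strict hd (hG x) hc y hxy
  have h2 := first_order_strict hd (hG y) hc x hxy.symm
  simp only [dotProduct_sub, sub_dotProduct] at *
  linarith

/-- One Consensus ALADIN iteration with constant matrices for the
consensus problem `min Σᵢ fᵢ(xᵢ) s.t. xᵢ = z`: if each `fᵢ` is differentiable and
strictly convex, `(z*, λ*)` is a KKT point, and the input duals satisfy `Σᵢ λᵢ = 0`,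
then the energy function `L` does not increase: `L(z⁺, λ⁺) ≤ L(z, λ)`; moreover if
`xⱼ⁺ ≠ z*` for some `j`, the inequality is strict. -/
theorem stmt_0 {n N : ℕ} (hN : 0 < N)
    (f : Fin N → (Fin n → ℝ) → ℝ)
    (gradf : Fin N → (Fin n → ℝ) → (Fin n → ℝ))
    (hdiff : ∀ i, Differentiable ℝ (f i))
    (hgrad : ∀ i x y, fderiv ℝ (f i) x y = gradf i x ⬝ᵥ y)
    (hconv : ∀ i, StrictConvexOn ℝ Set.univ (f i))
    (B : Fin N → Matrix (Fin n) (Fin n) ℝ)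
    (hB : ∀ i, (B i).PosDef)
    -- KKT point (z*, λ*)
    (zstar : Fin n → ℝ) (lamstar : Fin N → Fin n → ℝ)
    (hKKT1 : ∀ i, gradf i zstar + lamstar i = 0)
    (hKKT2 : ∑ i, lamstar i = 0)
    -- energy function
    (L : (Fin n → ℝ) → (Fin N → Fin n → ℝ) → ℝ)
    (hL : ∀ w μ, L w μ = ∑ i, ((μ i - lamstar i) ⬝ᵥ ((B i)⁻¹ *ᵥ (μ i - lamstar i))
        + (w - zstar) ⬝ᵥ ((B i) *ᵥ (w - zstar))))
    -- current iterate (z, λ) with Σᵢ λᵢ = 0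
    (z : Fin n → ℝ) (lam : Fin N → Fin n → ℝ)
    (hlam : ∑ i, lam i = 0)
    -- the iteration: xᵢ⁺ is a global minimizer of the local subproblem
    (xp : Fin N → Fin n → ℝ)
    (hxp : ∀ i x, f i (xp i) + lam i ⬝ᵥ xp i
          + (1 / 2 : ℝ) * ((xp i - z) ⬝ᵥ ((B i) *ᵥ (xp i - z)))
        ≤ f i x + lam i ⬝ᵥ x + (1 / 2 : ℝ) * ((x - z) ⬝ᵥ ((B i) *ᵥ (x - z))))
    -- gradient recovery, global update and dual update
    (g : Fin N → Fin n → ℝ)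
    (hg : ∀ i, g i = (B i) *ᵥ (z - xp i) - lam i)
    (zp : Fin n → ℝ)
    (hzp : zp = (∑ i, B i)⁻¹ *ᵥ (∑ i, ((B i) *ᵥ xp i - g i)))
    (lamp : Fin N → Fin n → ℝ)
    (hlamp : ∀ i, lamp i = (B i) *ᵥ (xp i - zp) - g i) :
    L zp lamp ≤ L z lam ∧ ((∃ j, xp j ≠ zstar) → L zp lamp < L z lam) := by
  have hgi : ∀ i, gradf i (xp i) = g i := fun i => by
    rw [hg i]; exact foc (hB i) (hdiff i) (hgrad i (xp i)) (hxp i)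
  have hstar : ∀ i, lamstar i = - gradf i zstar := fun i => by
    have := hKKT1 i
    exact (neg_eq_of_add_eq_zero_right this).symm
  have hlampsum : ∑ i, lamp i = 0 := by
    have hne : (Finset.univ : Finset (Fin N)).Nonempty := ⟨⟨0, hN⟩, mem_univ _⟩
    have hS : (∑ i, B i).PosDef := posDef_sum hne (fun i _ => hB i)
    have hdet : IsUnit (∑ i, B i).det := hS.det_pos.ne'.isUnit
    have h1 : (∑ i, B i) *ᵥ zp = ∑ i, ((B i) *ᵥ xp i - g i) := by
      rw [hzp, mulVec_mulVec, mul_nonsing_inv _ hdet, one_mulVec]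
    rw [sum_mulVec] at h1
    have h2 : ∀ i, lamp i = ((B i) *ᵥ xp i - g i) - B i *ᵥ zp := fun i => by
      rw [hlamp i, mulVec_sub]; abel
    rw [sum_congr rfl (fun i _ => h2 i), sum_sub_distrib, h1, sub_self]
  have e1 : ∀ i, lam i - lamstar i
      = B i *ᵥ ((z - zstar) - (xp i - zstar)) - (gradf i (xp i) - gradf i zstar) := fun i => by
    rw [hgi i, hg i, hstar i, sub_sub_sub_cancel_right]; abel
  have e2 : ∀ i, lamp i - lamstar i
      = B i *ᵥ ((xp i - zstar) - (zp - zstar)) - (gradf i (xp i) - gradf i zstar) := fun i => by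
    rw [hgi i, hlamp i, hstar i, sub_sub_sub_cancel_right]; abel
  have s1 : ∑ i, (z - zstar) ⬝ᵥ (lam i - lamstar i) = 0 := by
    rw [← dotProduct_sum, sum_sub_distrib, hlam, hKKT2]; simp
  have s2 : ∑ i, (zp - zstar) ⬝ᵥ (lamp i - lamstar i) = 0 := by
    rw [← dotProduct_sum, sum_sub_distrib, hlampsum, hKKT2]; simp
  have main : L z lam - L zp lamp
      = 4 * ∑ i, (gradf i (xp i) - gradf i zstar) ⬝ᵥ (xp i - zstar) := by
    have h : ∀ i, ((lam i - lamstar i) ⬝ᵥ ((B i)⁻¹ *ᵥ (lam i - lamstar i))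
        + (z - zstar) ⬝ᵥ ((B i) *ᵥ (z - zstar)))
        - ((lamp i - lamstar i) ⬝ᵥ ((B i)⁻¹ *ᵥ (lamp i - lamstar i))
        + (zp - zstar) ⬝ᵥ ((B i) *ᵥ (zp - zstar)))
        = 4 * ((gradf i (xp i) - gradf i zstar) ⬝ᵥ (xp i - zstar))
          + 2 * ((z - zstar) ⬝ᵥ (lam i - lamstar i))
          + 2 * ((zp - zstar) ⬝ᵥ (lamp i - lamstar i)) := fun i => by
      rw [e1 i, e2 i]; exact quad_id (hB i) _ _ _ _
    rw [hL, hL, ← sum_sub_distrib, sum_congr rfl (fun i _ => h i), sum_add_distrib,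
      sum_add_distrib, ← mul_sum, ← mul_sum, ← mul_sum, s1, s2]
    ring
  have hnn : ∀ i, 0 ≤ (gradf i (xp i) - gradf i zstar) ⬝ᵥ (xp i - zstar) := fun i => by
    by_cases hx : xp i = zstar
    · simp [hx]
    · exact (mono_strict (hdiff i) (hgrad i) (hconv i) _ _ hx).le
  constructor
  · have := sum_nonneg (s := univ) (fun i _ => hnn i)
    linarith
  · rintro ⟨j, hj⟩
    have := sum_pos' (s := univ) (fun i _ => hnn i)
      ⟨j, mem_univ j, mono_strict (hdiff j) (hgrad j) (hconv j) _ _ hj⟩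
    linarith
end

section
/- Consider one Consensus ALADIN iteration with constant matrices for the consensus problem. Suppose each f_i is differentiable and m-strongly convex with m > 0, (z*, λ*) is a KKT point, and the input dual variables satisfy Σ_i λ_i = 0. Then L(z⁺, λ⁺) ≤ L(z, λ) − 4m Σ_{i=1}^N ‖x_i⁺ − z*‖². -/
open Matrix Finset

lemma dotB_symm {n : ℕ} {B : Matrix (Fin n) (Fin n) ℝ} (hB : B.PosDef) (u v : Fin n → ℝ) :
    u ⬝ᵥ (B *ᵥ v) = v ⬝ᵥ (B *ᵥ u) := by
  have h : Bᵀ = B := by simpa using hB.isHermitian.eq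
  rw [dotProduct_mulVec, ← mulVec_transpose, h, dotProduct_comm]

lemma quad_inv {n : ℕ} {B : Matrix (Fin n) (Fin n) ℝ} (hB : B.PosDef) (v d : Fin n → ℝ) :
    (B *ᵥ v - d) ⬝ᵥ (B⁻¹ *ᵥ (B *ᵥ v - d))
      = v ⬝ᵥ (B *ᵥ v) - 2 * (v ⬝ᵥ d) + d ⬝ᵥ (B⁻¹ *ᵥ d) := by
  have hu : IsUnit B.det := (Matrix.isUnit_iff_isUnit_det B).1 hB.isUnit
  have h1 : B⁻¹ *ᵥ (B *ᵥ v) = v := by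
    rw [mulVec_mulVec, nonsing_inv_mul _ hu, one_mulVec]
  have h2 : B *ᵥ (B⁻¹ *ᵥ d) = d := by
    rw [mulVec_mulVec, mul_nonsing_inv _ hu, one_mulVec]
  have h3 : (B *ᵥ v) ⬝ᵥ (B⁻¹ *ᵥ d) = v ⬝ᵥ d := by
    rw [dotProduct_comm, dotB_symm hB, h2]
  rw [mulVec_sub, h1, sub_dotProduct, dotProduct_sub, dotProduct_sub, h3,
    dotProduct_comm (B *ᵥ v) v, dotProduct_comm d v]
  ring

lemma opt_grad {n : ℕ} {B : Matrix (Fin n) (Fin n) ℝ} (hB : B.PosDef)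
    (f : (Fin n → ℝ) → ℝ) (G x z l : Fin n → ℝ)
    (hd : Differentiable ℝ f) (hG : ∀ y, fderiv ℝ f x y = G ⬝ᵥ y)
    (hx : ∀ w, f x + l ⬝ᵥ x + (1 / 2 : ℝ) * ((x - z) ⬝ᵥ (B *ᵥ (x - z)))
        ≤ f w + l ⬝ᵥ w + (1 / 2 : ℝ) * ((w - z) ⬝ᵥ (B *ᵥ (w - z)))) :
    B *ᵥ (z - x) - l = G := by
  have key : ∀ y, G ⬝ᵥ y + l ⬝ᵥ y + y ⬝ᵥ (B *ᵥ (x - z)) = 0 := by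
    intro y
    have hl : HasDerivAt (fun t : ℝ => x + t • y) y 0 := by
      simpa using ((hasDerivAt_id (0 : ℝ)).smul_const y).const_add x
    have hf : HasDerivAt (fun t : ℝ => f (x + t • y)) (G ⬝ᵥ y) 0 := by
      have h0 : HasFDerivAt f (fderiv ℝ f x) (x + (0 : ℝ) • y) := by
        simpa using (hd x).hasFDerivAt
      have := h0.comp_hasDerivAt (0 : ℝ) hl
      rw [hG] at this
      exact this
    have hq : HasDerivAt (fun t : ℝ => t * (l ⬝ᵥ y + y ⬝ᵥ (B *ᵥ (x - z)))
        + t ^ 2 * ((1 / 2 : ℝ) * (y ⬝ᵥ (B *ᵥ y)))) (l ⬝ᵥ y + y ⬝ᵥ (B *ᵥ (x - z))) 0 := by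
      have h1 := (hasDerivAt_id (0 : ℝ)).mul_const (l ⬝ᵥ y + y ⬝ᵥ (B *ᵥ (x - z)))
      have h2 := (hasDerivAt_pow 2 (0 : ℝ)).mul_const ((1 / 2 : ℝ) * (y ⬝ᵥ (B *ᵥ y)))
      have h3 := h1.add h2
      refine HasDerivAt.congr_deriv h3 ?_
      simp
    have hs := hf.add hq
    have hmin : IsLocalMin ((fun t : ℝ => f (x + t • y)) +
        (fun t : ℝ => t * (l ⬝ᵥ y + y ⬝ᵥ (B *ᵥ (x - z)))
        + t ^ 2 * ((1 / 2 : ℝ) * (y ⬝ᵥ (B *ᵥ y))))) 0 := by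
      refine Filter.Eventually.of_forall fun t => ?_
      have h := hx (x + t • y)
      have e : x + t • y - z = (x - z) + t • y := by abel
      have hsym := dotB_symm hB (x - z) y
      rw [e] at h
      simp only [mulVec_add, mulVec_smul, dotProduct_add, add_dotProduct, dotProduct_smul,
        smul_dotProduct, smul_eq_mul, hsym] at h
      simp only [Pi.add_apply, zero_smul, add_zero]
      linarith
    have := hmin.hasDerivAt_eq_zero hs
    linarith
  have h0 : B *ᵥ (z - x) - l - G = 0 := by
    apply dotProduct_eq_zero
    intro y
    have := key y
    have e : z - x = -(x - z) := by abel
    rw [e, mulVec_neg, sub_dotProduct, sub_dotProduct, neg_dotProduct, dotProduct_comm (B *ᵥ _) y]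
    linarith
  exact sub_eq_zero.1 h0

/-- One Consensus ALADIN iteration with constant matrices for the
consensus problem: if each `fᵢ` is differentiable and `m`-strongly convex (`m > 0`),
`(z*, λ*)` is a KKT point, and `Σᵢ λᵢ = 0`, then
`L(z⁺, λ⁺) ≤ L(z, λ) − 4m Σᵢ ‖xᵢ⁺ − z*‖²`. -/
theorem stmt_1 {n N : ℕ} (hN : 0 < N) (m : ℝ) (hm : 0 < m)
    (f : Fin N → (Fin n → ℝ) → ℝ)
    (gradf : Fin N → (Fin n → ℝ) → (Fin n → ℝ))
    (hdiff : ∀ i, Differentiable ℝ (f i))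
    (hgrad : ∀ i x y, fderiv ℝ (f i) x y = gradf i x ⬝ᵥ y)
    -- m-strong convexity: f(y) ≥ f(x) + ∇f(x)ᵀ(y − x) + (m/2)‖y − x‖²
    (hsc : ∀ i x y, f i x + gradf i x ⬝ᵥ (y - x) + m / 2 * ((y - x) ⬝ᵥ (y - x)) ≤ f i y)
    (B : Fin N → Matrix (Fin n) (Fin n) ℝ)
    (hB : ∀ i, (B i).PosDef)
    -- KKT point (z*, λ*)
    (zstar : Fin n → ℝ) (lamstar : Fin N → Fin n → ℝ)
    (hKKT1 : ∀ i, gradf i zstar + lamstar i = 0)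
    (hKKT2 : ∑ i, lamstar i = 0)
    -- energy function
    (L : (Fin n → ℝ) → (Fin N → Fin n → ℝ) → ℝ)
    (hL : ∀ w μ, L w μ = ∑ i, ((μ i - lamstar i) ⬝ᵥ ((B i)⁻¹ *ᵥ (μ i - lamstar i))
        + (w - zstar) ⬝ᵥ ((B i) *ᵥ (w - zstar))))
    -- current iterate (z, λ) with Σᵢ λᵢ = 0
    (z : Fin n → ℝ) (lam : Fin N → Fin n → ℝ)
    (hlam : ∑ i, lam i = 0)
    -- the iteration: xᵢ⁺ is the global minimizer of the local subproblem
    (xp : Fin N → Fin n → ℝ)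
    (hxp : ∀ i x, f i (xp i) + lam i ⬝ᵥ xp i
          + (1 / 2 : ℝ) * ((xp i - z) ⬝ᵥ ((B i) *ᵥ (xp i - z)))
        ≤ f i x + lam i ⬝ᵥ x + (1 / 2 : ℝ) * ((x - z) ⬝ᵥ ((B i) *ᵥ (x - z))))
    -- gradient recovery, global update and dual update
    (g : Fin N → Fin n → ℝ)
    (hg : ∀ i, g i = (B i) *ᵥ (z - xp i) - lam i)
    (zp : Fin n → ℝ)
    (hzp : zp = (∑ i, B i)⁻¹ *ᵥ (∑ i, ((B i) *ᵥ xp i - g i)))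
    (lamp : Fin N → Fin n → ℝ)
    (hlamp : ∀ i, lamp i = (B i) *ᵥ (xp i - zp) - g i) :
    L zp lamp ≤ L z lam - 4 * m * ∑ i, ((xp i - zstar) ⬝ᵥ (xp i - zstar)) := by
  have hgr : ∀ i, g i = gradf i (xp i) := fun i => by
    rw [hg i]
    exact opt_grad (hB i) (f i) _ _ _ _ (hdiff i) (hgrad i _) (hxp i)
  have hls : ∀ i, lamstar i = - gradf i zstar := fun i => by
    rw [eq_neg_iff_add_eq_zero, add_comm]; exact hKKT1 i
  have hmono : ∀ i, m * ((xp i - zstar) ⬝ᵥ (xp i - zstar))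
      ≤ (xp i - zstar) ⬝ᵥ (g i + lamstar i) := fun i => by
    have h1 := hsc i (xp i) zstar
    have h2 := hsc i zstar (xp i)
    have e : zstar - xp i = -(xp i - zstar) := by abel
    rw [e] at h1
    simp only [dotProduct_neg, neg_dotProduct] at h1
    rw [hgr i, hls i, dotProduct_add, dotProduct_neg, dotProduct_comm _ (gradf i (xp i)),
      dotProduct_comm _ (gradf i zstar)]
    linarith
  have e1 : ∀ i, lam i - lamstar i
      = B i *ᵥ ((z - zstar) - (xp i - zstar)) - (g i + lamstar i) := fun i => by
    rw [hg i, sub_sub_sub_cancel_right]; abel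
  have e2 : ∀ i, lamp i - lamstar i
      = B i *ᵥ ((xp i - zstar) - (zp - zstar)) - (g i + lamstar i) := fun i => by
    rw [hlamp i, sub_sub_sub_cancel_right]; abel
  have hSpd : (∑ i, B i).PosDef := by
    haveI : Nonempty (Fin N) := ⟨⟨0, hN⟩⟩
    exact Matrix.posDef_sum Finset.univ_nonempty (fun i _ => hB i)
  have hSu : IsUnit (∑ i, B i).det := (Matrix.isUnit_iff_isUnit_det _).1 hSpd.isUnit
  have hlamp0 : ∑ i, lamp i = 0 := by
    have h1 : (∑ i, B i) *ᵥ zp = ∑ i, (B i *ᵥ xp i - g i) := by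
      rw [hzp, mulVec_mulVec, mul_nonsing_inv _ hSu, one_mulVec]
    have h2 : ∀ i, lamp i = (B i *ᵥ xp i - g i) - B i *ᵥ zp := fun i => by
      rw [hlamp i, mulVec_sub]; abel
    simp_rw [h2]
    rw [Finset.sum_sub_distrib, ← h1, Matrix.sum_mulVec, sub_self]
  have s1 : ∑ i, (z - zstar) ⬝ᵥ (lam i - lamstar i) = 0 := by
    rw [← dotProduct_sum, Finset.sum_sub_distrib, hlam, hKKT2]; simp
  have s2 : ∑ i, (zp - zstar) ⬝ᵥ (lamp i - lamstar i) = 0 := by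
    rw [← dotProduct_sum, Finset.sum_sub_distrib, hlamp0, hKKT2]; simp
  have main : ∀ i, ((lamp i - lamstar i) ⬝ᵥ ((B i)⁻¹ *ᵥ (lamp i - lamstar i))
        + (zp - zstar) ⬝ᵥ ((B i) *ᵥ (zp - zstar)))
      + 2 * ((zp - zstar) ⬝ᵥ (lamp i - lamstar i))
      + 4 * m * ((xp i - zstar) ⬝ᵥ (xp i - zstar))
      ≤ ((lam i - lamstar i) ⬝ᵥ ((B i)⁻¹ *ᵥ (lam i - lamstar i))
        + (z - zstar) ⬝ᵥ ((B i) *ᵥ (z - zstar)))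
      - 2 * ((z - zstar) ⬝ᵥ (lam i - lamstar i)) := fun i => by
    have hm' := hmono i
    rw [e1 i, e2 i, quad_inv (hB i), quad_inv (hB i)]
    generalize g i + lamstar i = d at *
    generalize xp i - zstar = p at *
    generalize zp - zstar = q at *
    generalize z - zstar = a at *
    have y1 := dotB_symm (hB i) a p
    have y2 := dotB_symm (hB i) q p
    simp only [mulVec_sub, dotProduct_sub, sub_dotProduct, y1, y2]
    linarith
  have hsum := Finset.sum_le_sum (fun i (_ : i ∈ Finset.univ) => main i)
  rw [Finset.sum_add_distrib, Finset.sum_add_distrib, Finset.sum_sub_distrib,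
    ← Finset.mul_sum, ← Finset.mul_sum, ← Finset.mul_sum, s1, s2] at hsum
  rw [hL, hL]
  linarith
end

section
/- Consider one Consensus ALADIN iteration with constant matrices for the consensus problem, where each f_i is differentiable and m-strongly convex with m > 0, (z*, λ*) is a KKT point, and the input dual variables satisfy Σ_i λ_i = 0. If δ > 0 satisfies δ · L(z⁺, λ⁺) ≤ 4m Σ_{i=1}^N ‖x_i⁺ − z*‖², then L(z⁺, λ⁺) ≤ (1/(1+δ)) · L(z, λ). -/
open Matrix Finset

theorem aux_quad {n : ℕ} (B : Matrix (Fin n) (Fin n) ℝ) (hB : B.PosDef) (x c : Fin n → ℝ) :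
    (B *ᵥ x + c) ⬝ᵥ (B⁻¹ *ᵥ (B *ᵥ x + c)) = x ⬝ᵥ (B *ᵥ x) + 2 * (c ⬝ᵥ x) + c ⬝ᵥ (B⁻¹ *ᵥ c) := by
  have hu : IsUnit B.det := (Matrix.isUnit_iff_isUnit_det B).1 hB.isUnit
  have h1 : B⁻¹ *ᵥ (B *ᵥ x) = x := by
    rw [Matrix.mulVec_mulVec, Matrix.nonsing_inv_mul B hu, Matrix.one_mulVec]
  have h2 : B *ᵥ (B⁻¹ *ᵥ c) = c := by
    rw [Matrix.mulVec_mulVec, Matrix.mul_nonsing_inv B hu, Matrix.one_mulVec]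
  have hs : Bᵀ = B := by simpa using hB.isHermitian.eq
  have h3 : (B *ᵥ x) ⬝ᵥ (B⁻¹ *ᵥ c) = c ⬝ᵥ x := by
    rw [dotProduct_comm, Matrix.dotProduct_mulVec, ← Matrix.mulVec_transpose, hs, h2]
  rw [Matrix.mulVec_add, h1, dotProduct_add, add_dotProduct, add_dotProduct, h3,
    dotProduct_comm (B *ᵥ x) x]
  ring

theorem aux_grad {n : ℕ} (f : (Fin n → ℝ) → ℝ) (G : Fin n → ℝ) (B : Matrix (Fin n) (Fin n) ℝ)
    (hB : B.PosDef) (l z p : Fin n → ℝ) (hd : Differentiable ℝ f)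
    (hG : ∀ y, fderiv ℝ f p y = G ⬝ᵥ y)
    (hp : ∀ x, f p + l ⬝ᵥ p + (1 / 2 : ℝ) * ((p - z) ⬝ᵥ (B *ᵥ (p - z)))
        ≤ f x + l ⬝ᵥ x + (1 / 2 : ℝ) * ((x - z) ⬝ᵥ (B *ᵥ (x - z)))) :
    G = B *ᵥ (z - p) - l := by
  have hs : Bᵀ = B := by simpa using hB.isHermitian.eq
  have key : ∀ v, G ⬝ᵥ v + l ⬝ᵥ v + (B *ᵥ (p - z)) ⬝ᵥ v = 0 := by
    intro v
    have hf : HasDerivAt (fun t : ℝ => f (p + t • v)) (G ⬝ᵥ v) 0 := by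
      have hline : HasDerivAt (fun t : ℝ => p + t • v) v 0 := by
        simpa using ((hasDerivAt_id (0:ℝ)).smul_const v).const_add p
      have h1 : HasFDerivAt f (fderiv ℝ f p) (p + (0:ℝ) • v) := by
        have := (hd p).hasFDerivAt
        rwa [show p + (0:ℝ) • v = p by simp]
      have h := h1.comp_hasDerivAt (0:ℝ) hline
      rw [hG] at h
      exact h
    have hq : HasDerivAt (fun t : ℝ => t * (l ⬝ᵥ v + (B *ᵥ (p - z)) ⬝ᵥ v)
        + t ^ 2 * (1 / 2 * (v ⬝ᵥ (B *ᵥ v)))) (l ⬝ᵥ v + (B *ᵥ (p - z)) ⬝ᵥ v) 0 := by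
      have h := ((hasDerivAt_id (0:ℝ)).mul_const (l ⬝ᵥ v + (B *ᵥ (p - z)) ⬝ᵥ v)).add
        ((hasDerivAt_pow 2 (0:ℝ)).mul_const (1 / 2 * (v ⬝ᵥ (B *ᵥ v))))
      exact h.congr_deriv (by simp)
    have hsum := hf.add hq
    have hmin : IsLocalMin ((fun t : ℝ => f (p + t • v)) + (fun t : ℝ => t * (l ⬝ᵥ v + (B *ᵥ (p - z)) ⬝ᵥ v)
        + t ^ 2 * (1 / 2 * (v ⬝ᵥ (B *ᵥ v))))) 0 := by
      refine Filter.Eventually.of_forall fun t => ?_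
      have h := hp (p + t • v)
      have e : p + t • v - z = (p - z) + t • v := by abel
      have e2 : (p - z) ⬝ᵥ (B *ᵥ v) = (B *ᵥ (p - z)) ⬝ᵥ v := by
        rw [Matrix.dotProduct_mulVec, ← Matrix.mulVec_transpose, hs]
      rw [e, Matrix.mulVec_add, Matrix.mulVec_smul] at h
      simp only [dotProduct_add, add_dotProduct, smul_dotProduct, dotProduct_smul, smul_eq_mul,
        e2, dotProduct_comm v (B *ᵥ (p - z))] at h
      simp only [Pi.add_apply, zero_smul, add_zero]
      nlinarith
    have := hmin.hasDerivAt_eq_zero hsum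
    linarith
  have h0 : G + l + B *ᵥ (p - z) = 0 := by
    apply dotProduct_self_eq_zero.1
    have := key (G + l + B *ᵥ (p - z))
    rw [← add_dotProduct, ← add_dotProduct] at this
    exact this
  have e : B *ᵥ (z - p) = - (B *ᵥ (p - z)) := by
    rw [← Matrix.mulVec_neg, neg_sub]
  rw [e]
  have : G = (G + l + B *ᵥ (p - z)) - l - B *ᵥ (p - z) := by abel
  rw [this, h0]
  abel

/-- One Consensus ALADIN iteration with constant matrices for the
consensus problem, with each `fᵢ` differentiable and `m`-strongly convex (`m > 0`),
`(z*, λ*)` a KKT point, and `Σᵢ λᵢ = 0`: if `δ > 0` satisfies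
`δ · L(z⁺, λ⁺) ≤ 4m Σᵢ ‖xᵢ⁺ − z*‖²`, then `L(z⁺, λ⁺) ≤ (1/(1+δ)) · L(z, λ)`. -/
theorem stmt_2 {n N : ℕ} (hN : 0 < N) (m : ℝ) (hm : 0 < m)
    (f : Fin N → (Fin n → ℝ) → ℝ)
    (gradf : Fin N → (Fin n → ℝ) → (Fin n → ℝ))
    (hdiff : ∀ i, Differentiable ℝ (f i))
    (hgrad : ∀ i x y, fderiv ℝ (f i) x y = gradf i x ⬝ᵥ y)
    -- m-strong convexity: f(y) ≥ f(x) + ∇f(x)ᵀ(y − x) + (m/2)‖y − x‖²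
    (hsc : ∀ i x y, f i x + gradf i x ⬝ᵥ (y - x) + m / 2 * ((y - x) ⬝ᵥ (y - x)) ≤ f i y)
    (B : Fin N → Matrix (Fin n) (Fin n) ℝ)
    (hB : ∀ i, (B i).PosDef)
    -- KKT point (z*, λ*)
    (zstar : Fin n → ℝ) (lamstar : Fin N → Fin n → ℝ)
    (hKKT1 : ∀ i, gradf i zstar + lamstar i = 0)
    (hKKT2 : ∑ i, lamstar i = 0)
    -- energy function
    (L : (Fin n → ℝ) → (Fin N → Fin n → ℝ) → ℝ)
    (hL : ∀ w μ, L w μ = ∑ i, ((μ i - lamstar i) ⬝ᵥ ((B i)⁻¹ *ᵥ (μ i - lamstar i))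
        + (w - zstar) ⬝ᵥ ((B i) *ᵥ (w - zstar))))
    -- current iterate (z, λ) with Σᵢ λᵢ = 0
    (z : Fin n → ℝ) (lam : Fin N → Fin n → ℝ)
    (hlam : ∑ i, lam i = 0)
    -- the iteration: xᵢ⁺ is the global minimizer of the local subproblem
    (xp : Fin N → Fin n → ℝ)
    (hxp : ∀ i x, f i (xp i) + lam i ⬝ᵥ xp i
          + (1 / 2 : ℝ) * ((xp i - z) ⬝ᵥ ((B i) *ᵥ (xp i - z)))
        ≤ f i x + lam i ⬝ᵥ x + (1 / 2 : ℝ) * ((x - z) ⬝ᵥ ((B i) *ᵥ (x - z))))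
    -- gradient recovery, global update and dual update
    (g : Fin N → Fin n → ℝ)
    (hg : ∀ i, g i = (B i) *ᵥ (z - xp i) - lam i)
    (zp : Fin n → ℝ)
    (hzp : zp = (∑ i, B i)⁻¹ *ᵥ (∑ i, ((B i) *ᵥ xp i - g i)))
    (lamp : Fin N → Fin n → ℝ)
    (hlamp : ∀ i, lamp i = (B i) *ᵥ (xp i - zp) - g i)
    -- the contraction parameter δ
    (δ : ℝ) (hδ : 0 < δ)
    (hδL : δ * L zp lamp ≤ 4 * m * ∑ i, ((xp i - zstar) ⬝ᵥ (xp i - zstar))) :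
    L zp lamp ≤ (1 / (1 + δ)) * L z lam := by
  have hgg : ∀ i, gradf i (xp i) = g i := fun i => by
    rw [hg i]
    exact aux_grad (f i) _ (B i) (hB i) (lam i) z (xp i) (hdiff i) (hgrad i (xp i)) (hxp i)
  have hmono : ∀ i, m * ((xp i - zstar) ⬝ᵥ (xp i - zstar))
      ≤ (g i + lamstar i) ⬝ᵥ (xp i - zstar) := by
    intro i
    have h1 := hsc i (xp i) zstar
    have h2 := hsc i zstar (xp i)
    have e : zstar - xp i = -(xp i - zstar) := by abel
    have e3 : gradf i zstar = - lamstar i := eq_neg_of_add_eq_zero_left (hKKT1 i)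
    rw [hgg, e, neg_dotProduct_neg, dotProduct_neg] at h1
    rw [e3, neg_dotProduct] at h2
    rw [add_dotProduct]
    linarith
  -- dual sum after the step
  have hS : IsUnit (∑ i, B i).det := by
    have : (∑ i, B i).PosDef := by
      have : Nonempty (Fin N) := ⟨⟨0, hN⟩⟩
      exact Matrix.posDef_sum Finset.univ_nonempty (fun i _ => hB i)
    exact (Matrix.isUnit_iff_isUnit_det _).1 this.isUnit
  have hlp : ∑ i, lamp i = 0 := by
    have h1 : (∑ i, B i) *ᵥ zp = ∑ i, ((B i) *ᵥ xp i - g i) := by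
      rw [hzp, Matrix.mulVec_mulVec, Matrix.mul_nonsing_inv _ hS, Matrix.one_mulVec]
    have h2 : ∀ i, lamp i = ((B i) *ᵥ xp i - g i) - (B i) *ᵥ zp := by
      intro i
      rw [hlamp i, Matrix.mulVec_sub]
      abel
    simp only [h2]
    rw [Finset.sum_sub_distrib, ← h1, Matrix.sum_mulVec, sub_self]
  have hc : ∀ (μ : Fin N → Fin n → ℝ) (w : Fin n → ℝ), ∑ i, μ i = 0 →
      ∑ i, ((μ i - lamstar i) ⬝ᵥ w) = 0 := by
    intro μ w h
    rw [← sum_dotProduct, Finset.sum_sub_distrib, h, hKKT2]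
    simp
  have hA : ∀ i, (((lam i - lamstar i) ⬝ᵥ ((B i)⁻¹ *ᵥ (lam i - lamstar i))
        + (z - zstar) ⬝ᵥ ((B i) *ᵥ (z - zstar))) - 2 * ((lam i - lamstar i) ⬝ᵥ (z - zstar)))
      - (((lamp i - lamstar i) ⬝ᵥ ((B i)⁻¹ *ᵥ (lamp i - lamstar i))
        + (zp - zstar) ⬝ᵥ ((B i) *ᵥ (zp - zstar))) + 2 * ((lamp i - lamstar i) ⬝ᵥ (zp - zstar)))
      = 4 * ((g i + lamstar i) ⬝ᵥ (xp i - zstar)) := by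
    intro i
    have q1 := aux_quad (B i) (hB i) (z - zstar) (-(lam i - lamstar i))
    have q2 := aux_quad (B i) (hB i) (zp - zstar) (lamp i - lamstar i)
    have q3 := aux_quad (B i) (hB i) (xp i - zstar) (g i + lamstar i)
    have q4 := aux_quad (B i) (hB i) (xp i - zstar) (-(g i + lamstar i))
    have e1 : B i *ᵥ (z - zstar) + -(lam i - lamstar i)
        = B i *ᵥ (xp i - zstar) + (g i + lamstar i) := by
      rw [hg i]; simp only [Matrix.mulVec_sub]; abel
    have e2 : B i *ᵥ (zp - zstar) + (lamp i - lamstar i)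
        = B i *ᵥ (xp i - zstar) + -(g i + lamstar i) := by
      rw [hlamp i]; simp only [Matrix.mulVec_sub]; abel
    rw [e1, q3] at q1
    rw [e2, q4] at q2
    simp only [Matrix.mulVec_neg, neg_dotProduct, dotProduct_neg, neg_neg] at q1 q2
    linarith
  have hdiffL : L z lam - L zp lamp = 4 * ∑ i, ((g i + lamstar i) ⬝ᵥ (xp i - zstar)) := by
    have h := Finset.sum_congr (rfl : (Finset.univ : Finset (Fin N)) = Finset.univ)
      (fun i _ => hA i)
    rw [Finset.sum_sub_distrib, Finset.sum_sub_distrib, Finset.sum_add_distrib (g := fun i =>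
      2 * ((lamp i - lamstar i) ⬝ᵥ (zp - zstar))), ← Finset.mul_sum, ← Finset.mul_sum,
      ← Finset.mul_sum, hc lam _ hlam, hc lamp _ hlp, ← hL, ← hL] at h
    linarith
  have hsum := Finset.sum_le_sum (s := Finset.univ) (fun i _ => hmono i)
  rw [← Finset.mul_sum] at hsum
  rw [one_div, inv_mul_eq_div, le_div_iff₀ (by linarith)]
  linarith
end

section
/- Let sequences (z^k, λ^k) for k = 0, 1, 2, … be generated by iterating the Consensus ALADIN step with constant matrices, where each f_i is differentiable and m-strongly convex with m > 0, (z*, λ*) is a KKT point, and Σ_i λ_i^0 = 0. Suppose δ > 0 is such that for every k, δ · L(z^{k+1}, λ^{k+1}) ≤ 4m Σ_{i=1}^N ‖x_i^{k+1} − z*‖², where x_i^{k+1} are the local minimizers produced in the step from (z^k, λ^k). Then for all k, Σ_{i=1}^N ‖z^k − z*‖²_{B_i} ≤ L(z^k, λ^k) ≤ (1/(1+δ))^k · L(z^0, λ^0); in particular z^k converges to z* at a linear rate. -/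
open Matrix Finset


lemma aux_symm {n : ℕ} {M : Matrix (Fin n) (Fin n) ℝ} (hM : M.PosDef) (u v : Fin n → ℝ) :
    u ⬝ᵥ (M *ᵥ v) = v ⬝ᵥ (M *ᵥ u) := by
  have h : Mᵀ = M := by
    have := hM.isHermitian.eq
    rwa [conjTranspose_eq_transpose_of_trivial] at this
  rw [dotProduct_mulVec, ← mulVec_transpose, h, dotProduct_comm]

lemma aux_nonneg {n : ℕ} {M : Matrix (Fin n) (Fin n) ℝ} (hM : M.PosDef) (u : Fin n → ℝ) :
    0 ≤ u ⬝ᵥ (M *ᵥ u) := by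
  have := hM.posSemidef.dotProduct_mulVec_nonneg u
  simpa using this

lemma aux_inv {n : ℕ} {M : Matrix (Fin n) (Fin n) ℝ} (hM : M.PosDef) (u : Fin n → ℝ) :
    M⁻¹ *ᵥ (M *ᵥ u) = u := by
  rw [mulVec_mulVec, nonsing_inv_mul _ ((isUnit_iff_isUnit_det _).1 hM.isUnit), one_mulVec]

lemma aux_inv2 {n : ℕ} {M : Matrix (Fin n) (Fin n) ℝ} (hM : M.PosDef) (u : Fin n → ℝ) :
    M *ᵥ (M⁻¹ *ᵥ u) = u := by
  rw [mulVec_mulVec, mul_nonsing_inv _ ((isUnit_iff_isUnit_det _).1 hM.isUnit), one_mulVec]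

lemma aux_sq {n : ℕ} {M : Matrix (Fin n) (Fin n) ℝ} (hM : M.PosDef) (a l : Fin n → ℝ) :
    (M *ᵥ a + l) ⬝ᵥ (M⁻¹ *ᵥ (M *ᵥ a + l)) =
      l ⬝ᵥ (M⁻¹ *ᵥ l) + a ⬝ᵥ (M *ᵥ a) + 2 * (a ⬝ᵥ l) := by
  have h1 := aux_symm hM.inv (M *ᵥ a) l
  rw [aux_inv hM] at h1
  rw [mulVec_add, aux_inv hM, add_dotProduct, dotProduct_add, dotProduct_add, h1,
    dotProduct_comm (M *ᵥ a) a, dotProduct_comm l a]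
  ring

lemma aux_sq' {n : ℕ} {M : Matrix (Fin n) (Fin n) ℝ} (hM : M.PosDef) (a l : Fin n → ℝ) :
    (M *ᵥ a - l) ⬝ᵥ (M⁻¹ *ᵥ (M *ᵥ a - l)) =
      l ⬝ᵥ (M⁻¹ *ᵥ l) + a ⬝ᵥ (M *ᵥ a) - 2 * (a ⬝ᵥ l) := by
  have := aux_sq hM a (-l)
  simp only [mulVec_neg, dotProduct_neg, neg_dotProduct, neg_neg] at this
  rw [sub_eq_add_neg, this]
  ring

lemma aux_quad_s3 {n : ℕ} {M : Matrix (Fin n) (Fin n) ℝ} (hM : M.PosDef) (v y : Fin n → ℝ) (t : ℝ) :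
    (v + t • y) ⬝ᵥ (M *ᵥ (v + t • y)) =
      v ⬝ᵥ (M *ᵥ v) + 2 * t * (y ⬝ᵥ (M *ᵥ v)) + t * t * (y ⬝ᵥ (M *ᵥ y)) := by
  simp only [mulVec_add, mulVec_smul, add_dotProduct, dotProduct_add, smul_dotProduct,
    dotProduct_smul, smul_eq_mul]
  rw [aux_symm hM v y]
  ring

lemma aux_cs {n : ℕ} {M : Matrix (Fin n) (Fin n) ℝ} (hM : M.PosDef) (u v : Fin n → ℝ) :
    (u ⬝ᵥ v) ^ 2 ≤ (u ⬝ᵥ (M⁻¹ *ᵥ u)) * (v ⬝ᵥ (M *ᵥ v)) := by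
  have h : ∀ t : ℝ, 0 ≤ (u ⬝ᵥ (M⁻¹ *ᵥ u)) * (t * t) + (2 * (u ⬝ᵥ v)) * t + v ⬝ᵥ (M *ᵥ v) := by
    intro t
    have h1 := aux_nonneg hM (v + t • (M⁻¹ *ᵥ u))
    rw [aux_quad_s3 hM, aux_inv2 hM, aux_symm hM (M⁻¹ *ᵥ u) v, aux_inv2 hM,
      dotProduct_comm (M⁻¹ *ᵥ u) u, dotProduct_comm v u] at h1
    linarith
  have := discrim_le_zero h
  unfold discrim at this
  nlinarith

lemma aux_opt {n : ℕ} {M : Matrix (Fin n) (Fin n) ℝ} (hM : M.PosDef) (f : (Fin n → ℝ) → ℝ)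
    (gr : Fin n → ℝ) (l z x : Fin n → ℝ) (hd : Differentiable ℝ f)
    (hgr : ∀ y, fderiv ℝ f x y = gr ⬝ᵥ y)
    (hx : ∀ w, f x + l ⬝ᵥ x + (1 / 2 : ℝ) * ((x - z) ⬝ᵥ (M *ᵥ (x - z)))
        ≤ f w + l ⬝ᵥ w + (1 / 2 : ℝ) * ((w - z) ⬝ᵥ (M *ᵥ (w - z)))) :
    M *ᵥ (z - x) - l = gr := by
  have key : ∀ d : Fin n → ℝ, d ⬝ᵥ (gr + l + M *ᵥ (x - z)) = 0 := by
    intro d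
    have hline : HasDerivAt (fun t : ℝ => x + t • d) d 0 := by
      simpa using ((hasDerivAt_id (0 : ℝ)).smul_const d).const_add x
    have h1 : HasDerivAt (fun t : ℝ => f (x + t • d)) (gr ⬝ᵥ d) 0 := by
      rw [← hgr]
      have hf : HasFDerivAt f (fderiv ℝ f x) (x + (0 : ℝ) • d) := by
        simpa using (hd x).hasFDerivAt
      exact hf.comp_hasDerivAt (0 : ℝ) hline
    have hid := hasDerivAt_id (0 : ℝ)
    have hsq : HasDerivAt (fun t : ℝ => t ^ 2) 0 0 := by
      simpa using hasDerivAt_pow 2 (0 : ℝ)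
    have h2 := (h1.add (hid.mul_const (l ⬝ᵥ d + d ⬝ᵥ (M *ᵥ (x - z))))).add
      (hsq.mul_const ((1 / 2 : ℝ) * (d ⬝ᵥ (M *ᵥ d))))
    have hmin : IsLocalMin ((((fun t : ℝ => f (x + t • d)) +
        fun t : ℝ => id t * (l ⬝ᵥ d + d ⬝ᵥ (M *ᵥ (x - z)))) +
        fun t : ℝ => t ^ 2 * ((1 / 2 : ℝ) * (d ⬝ᵥ (M *ᵥ d))))) 0 := by
      refine Filter.Eventually.of_forall fun t => ?_
      have h3 := hx (x + t • d)
      rw [show x + t • d - z = (x - z) + t • d by abel, aux_quad_s3 hM, dotProduct_add,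
        dotProduct_smul, smul_eq_mul] at h3
      simp only [Pi.add_apply, id, zero_smul, add_zero, zero_mul, ne_eq, OfNat.ofNat_ne_zero,
        not_false_eq_true, zero_pow]
      nlinarith
    have h4 := hmin.hasDerivAt_eq_zero h2
    simp only [id, mul_zero, zero_mul, add_zero, one_mul] at h4
    rw [dotProduct_add, dotProduct_add, dotProduct_comm d gr, dotProduct_comm d l]
    linarith
  have h0 := dotProduct_self_eq_zero.1 (key (gr + l + M *ᵥ (x - z)))
  have : M *ᵥ (z - x) = - (M *ᵥ (x - z)) := by rw [← mulVec_neg, neg_sub]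
  rw [this, ← sub_eq_zero, ← neg_eq_zero, ← h0]
  abel

/-- Iterating the Consensus ALADIN step with constant matrices, with each
`fᵢ` differentiable and `m`-strongly convex (`m > 0`), `(z*, λ*)` a KKT point, and
`Σᵢ λᵢ⁰ = 0`: if `δ > 0` satisfies `δ · L(z^{k+1}, λ^{k+1}) ≤ 4m Σᵢ ‖xᵢ^{k+1} − z*‖²` for
every `k`, then for all `k`,
`Σᵢ ‖z^k − z*‖²_{Bᵢ} ≤ L(z^k, λ^k) ≤ (1/(1+δ))^k · L(z⁰, λ⁰)`;
in particular `z^k → z*` (at a linear rate). -/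
theorem stmt_3 {n N : ℕ} (hN : 0 < N) (m : ℝ) (hm : 0 < m)
    (f : Fin N → (Fin n → ℝ) → ℝ)
    (gradf : Fin N → (Fin n → ℝ) → (Fin n → ℝ))
    (hdiff : ∀ i, Differentiable ℝ (f i))
    (hgrad : ∀ i x y, fderiv ℝ (f i) x y = gradf i x ⬝ᵥ y)
    -- m-strong convexity: f(y) ≥ f(x) + ∇f(x)ᵀ(y − x) + (m/2)‖y − x‖²
    (hsc : ∀ i x y, f i x + gradf i x ⬝ᵥ (y - x) + m / 2 * ((y - x) ⬝ᵥ (y - x)) ≤ f i y)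
    (B : Fin N → Matrix (Fin n) (Fin n) ℝ)
    (hB : ∀ i, (B i).PosDef)
    -- KKT point (z*, λ*)
    (zstar : Fin n → ℝ) (lamstar : Fin N → Fin n → ℝ)
    (hKKT1 : ∀ i, gradf i zstar + lamstar i = 0)
    (hKKT2 : ∑ i, lamstar i = 0)
    -- energy function
    (L : (Fin n → ℝ) → (Fin N → Fin n → ℝ) → ℝ)
    (hL : ∀ w μ, L w μ = ∑ i, ((μ i - lamstar i) ⬝ᵥ ((B i)⁻¹ *ᵥ (μ i - lamstar i))
        + (w - zstar) ⬝ᵥ ((B i) *ᵥ (w - zstar))))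
    -- the sequences (z^k, λ^k) and local minimizers x^{k+1}
    (z : ℕ → Fin n → ℝ) (lam : ℕ → Fin N → Fin n → ℝ) (x : ℕ → Fin N → Fin n → ℝ)
    (g : ℕ → Fin N → Fin n → ℝ)
    (hlam0 : ∑ i, lam 0 i = 0)
    -- x_i^{k+1} is the global minimizer of the local subproblem at (z^k, λ^k)
    (hx : ∀ k i w, f i (x (k + 1) i) + lam k i ⬝ᵥ x (k + 1) i
          + (1 / 2 : ℝ) * ((x (k + 1) i - z k) ⬝ᵥ ((B i) *ᵥ (x (k + 1) i - z k)))
        ≤ f i w + lam k i ⬝ᵥ w + (1 / 2 : ℝ) * ((w - z k) ⬝ᵥ ((B i) *ᵥ (w - z k))))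
    -- gradient recovery, global update and dual update
    (hg : ∀ k i, g k i = (B i) *ᵥ (z k - x (k + 1) i) - lam k i)
    (hz : ∀ k, z (k + 1) = (∑ i, B i)⁻¹ *ᵥ (∑ i, ((B i) *ᵥ x (k + 1) i - g k i)))
    (hlamrec : ∀ k i, lam (k + 1) i = (B i) *ᵥ (x (k + 1) i - z (k + 1)) - g k i)
    -- the contraction parameter δ
    (δ : ℝ) (hδ : 0 < δ)
    (hδL : ∀ k, δ * L (z (k + 1)) (lam (k + 1))
        ≤ 4 * m * ∑ i, ((x (k + 1) i - zstar) ⬝ᵥ (x (k + 1) i - zstar))) :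
    (∀ k, (∑ i, (z k - zstar) ⬝ᵥ ((B i) *ᵥ (z k - zstar))) ≤ L (z k) (lam k)
        ∧ L (z k) (lam k) ≤ (1 / (1 + δ)) ^ k * L (z 0) (lam 0))
    ∧ Filter.Tendsto z Filter.atTop (nhds zstar) := by
  have hgg : ∀ k i, g k i = gradf i (x (k + 1) i) := fun k i => by
    rw [hg]
    exact aux_opt (hB i) (f i) _ (lam k i) (z k) (x (k + 1) i) (hdiff i) (hgrad i _) (hx k i)
  have hne : (univ : Finset (Fin N)).Nonempty := ⟨⟨0, hN⟩, mem_univ _⟩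
  have hS : (∑ i, B i).PosDef := posDef_sum hne fun i _ => hB i
  have hlam : ∀ k, ∑ i, lam k i = 0 := by
    intro k
    cases k with
    | zero => exact hlam0
    | succ k =>
      have h1 := aux_inv2 hS (∑ i, ((B i) *ᵥ x (k + 1) i - g k i))
      rw [← hz, sum_mulVec] at h1
      rw [← sub_eq_zero, ← sum_sub_distrib] at h1
      rw [← neg_eq_zero, ← sum_neg_distrib, ← h1]
      refine sum_congr rfl fun i _ => ?_
      rw [hlamrec, mulVec_sub]
      abel
  have hcross : ∀ k, ∑ i, (z k - zstar) ⬝ᵥ (lam k i - lamstar i) = 0 := by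
    intro k
    rw [← dotProduct_sum, sum_sub_distrib, hlam, hKKT2]
    simp
  have hmono : ∀ i y, m * ((y - zstar) ⬝ᵥ (y - zstar)) ≤
      (y - zstar) ⬝ᵥ (gradf i y - gradf i zstar) := by
    intro i y
    have h1 := hsc i y zstar
    have h2 := hsc i zstar y
    rw [← neg_sub y zstar] at h1
    simp only [dotProduct_neg, neg_dotProduct, neg_neg] at h1
    rw [dotProduct_comm _ (gradf i y - gradf i zstar), sub_dotProduct (gradf i y)]
    linarith
  have hstep : ∀ k, L (z (k + 1)) (lam (k + 1)) +
      4 * m * ∑ i, ((x (k + 1) i - zstar) ⬝ᵥ (x (k + 1) i - zstar)) ≤ L (z k) (lam k) := by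
    intro k
    have e1 : L (z k) (lam k) = ∑ i, ((B i *ᵥ (z k - zstar) - (lam k i - lamstar i)) ⬝ᵥ
        ((B i)⁻¹ *ᵥ (B i *ᵥ (z k - zstar) - (lam k i - lamstar i)))) := by
      rw [hL, sum_congr rfl fun i _ => aux_sq' (hB i) _ _, sum_sub_distrib, ← mul_sum, hcross]
      ring
    have e2 : L (z (k + 1)) (lam (k + 1)) =
        ∑ i, ((B i *ᵥ (z (k + 1) - zstar) + (lam (k + 1) i - lamstar i)) ⬝ᵥ
        ((B i)⁻¹ *ᵥ (B i *ᵥ (z (k + 1) - zstar) + (lam (k + 1) i - lamstar i)))) := by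
      rw [hL, sum_congr rfl fun i _ => aux_sq (hB i) _ _, sum_add_distrib (g := fun i => 2 * _),
        ← mul_sum, hcross]
      ring
    rw [e1, e2, mul_sum, ← sum_add_distrib]
    refine sum_le_sum fun i _ => ?_
    have hls : lamstar i = - gradf i zstar := by
      rw [eq_neg_iff_add_eq_zero, add_comm]; exact hKKT1 i
    have hg' := hg k i
    have hr := hlamrec k i
    rw [hgg] at hg' hr
    have v1 : B i *ᵥ (z k - zstar) - (lam k i - lamstar i) =
        B i *ᵥ (x (k + 1) i - zstar) + (gradf i (x (k + 1) i) - gradf i zstar) := by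
      rw [hg', hls]
      simp only [mulVec_sub]
      abel
    have v2 : B i *ᵥ (z (k + 1) - zstar) + (lam (k + 1) i - lamstar i) =
        B i *ᵥ (x (k + 1) i - zstar) - (gradf i (x (k + 1) i) - gradf i zstar) := by
      rw [hr, hls]
      simp only [mulVec_sub]
      abel
    rw [v1, v2, aux_sq (hB i), aux_sq' (hB i)]
    have := hmono i (x (k + 1) i)
    linarith
  have hlow : ∀ k, (∑ i, (z k - zstar) ⬝ᵥ ((B i) *ᵥ (z k - zstar))) ≤ L (z k) (lam k) := by
    intro k
    rw [hL]
    refine sum_le_sum fun i _ => ?_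
    have := aux_nonneg (hB i).inv (lam k i - lamstar i)
    linarith
  have hup : ∀ k, L (z k) (lam k) ≤ (1 / (1 + δ)) ^ k * L (z 0) (lam 0) := by
    intro k
    induction k with
    | zero => simp
    | succ k ih =>
      have h1 := hstep k
      have h2 := hδL k
      have h3 : L (z (k + 1)) (lam (k + 1)) ≤ (1 / (1 + δ)) * L (z k) (lam k) := by
        rw [one_div, ← div_eq_inv_mul, le_div_iff₀ (by linarith)]
        linarith
      calc _ ≤ _ := h3
        _ ≤ (1 / (1 + δ)) * ((1 / (1 + δ)) ^ k * L (z 0) (lam 0)) := by gcongr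
        _ = _ := by ring
  refine ⟨fun k => ⟨hlow k, hup k⟩, ?_⟩
  rw [tendsto_pi_nhds]
  intro j
  have hbound : ∀ k, (z k j - zstar j) ^ 2 ≤
      ((Pi.single j 1 : Fin n → ℝ) ⬝ᵥ ((∑ i, B i)⁻¹ *ᵥ Pi.single j 1)) *
        ((1 / (1 + δ)) ^ k * L (z 0) (lam 0)) := by
    intro k
    have h1 := aux_cs hS (Pi.single j 1) (z k - zstar)
    have h2 := (hlow k).trans (hup k)
    rw [sum_mulVec, dotProduct_sum] at h1
    rw [single_one_dotProduct, Pi.sub_apply] at h1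
    exact h1.trans (mul_le_mul_of_nonneg_left h2 (aux_nonneg hS.inv _))
  have hp : Filter.Tendsto (fun k : ℕ => (1 / (1 + δ)) ^ k) Filter.atTop (nhds 0) := by
    apply tendsto_pow_atTop_nhds_zero_of_lt_one (by positivity)
    rw [div_lt_one (by linarith)]
    linarith
  have hsq : Filter.Tendsto (fun k => (z k j - zstar j) ^ 2) Filter.atTop (nhds 0) := by
    refine squeeze_zero (fun k => sq_nonneg _) hbound ?_
    simpa using (hp.mul_const (L (z 0) (lam 0))).const_mul
      ((Pi.single j 1 : Fin n → ℝ) ⬝ᵥ ((∑ i, B i)⁻¹ *ᵥ Pi.single j 1))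
  have habs : Filter.Tendsto (fun k => |z k j - zstar j|) Filter.atTop (nhds 0) := by
    have := (Real.continuous_sqrt.tendsto 0).comp hsq
    simpa [Function.comp_def, Real.sqrt_sq_eq_abs] using this
  have h0 := (tendsto_zero_iff_abs_tendsto_zero _).2 habs
  simpa using h0.add_const (zstar j)
end

section
/- Let B_1, …, B_N be symmetric positive definite n×n matrices and let x_i⁺, λ_i, λ_i⁺, λ_i*, z, z⁺, z* ∈ ℝⁿ satisfy: x_i⁺ = ½ B_i⁻¹(λ_i⁺ − λ_i) + ½(z + z⁺) for each i, and Σ_i λ_i = 0, Σ_i λ_i⁺ = 0, Σ_i λ_i* = 0. Then Σ_{i=1}^N (λ_i − λ_i* + B_i(x_i⁺ − z))ᵀ(x_i⁺ − z*) = ¼ Σ_{i=1}^N (‖λ_i⁺ − λ_i*‖²_{B_i⁻¹} − ‖λ_i − λ_i*‖²_{B_i⁻¹}) + ¼ Σ_{i=1}^N (‖z⁺ − z*‖²_{B_i} − ‖z − z*‖²_{B_i}). -/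
open Matrix Finset

theorem aux_term {n : ℕ} (B : Matrix (Fin n) (Fin n) ℝ) (hB : B.PosDef)
    (x l lp ls z zp zs : Fin n → ℝ)
    (hx : x = (1 / 2 : ℝ) • (B⁻¹ *ᵥ (lp - l)) + (1 / 2 : ℝ) • (z + zp)) :
    (l - ls + B *ᵥ (x - z)) ⬝ᵥ (x - zs)
      = (1 / 4 : ℝ) * ((lp - ls) ⬝ᵥ (B⁻¹ *ᵥ (lp - ls)) - (l - ls) ⬝ᵥ (B⁻¹ *ᵥ (l - ls)))
        + (1 / 4 : ℝ) * ((zp - zs) ⬝ᵥ (B *ᵥ (zp - zs)) - (z - zs) ⬝ᵥ (B *ᵥ (z - zs)))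
        + (1 / 2 : ℝ) * ((l - ls) ⬝ᵥ (z - zs) + (lp - ls) ⬝ᵥ (zp - zs)) := by
  have hu : IsUnit B.det := hB.det_pos.ne'.isUnit
  have hT : Bᵀ = B := by simpa using hB.isHermitian.eq
  have sym : ∀ a b : Fin n → ℝ, (B *ᵥ a) ⬝ᵥ b = (B *ᵥ b) ⬝ᵥ a := by
    intro a b
    rw [dotProduct_comm, dotProduct_mulVec, ← mulVec_transpose, hT]
  obtain ⟨p, hp⟩ : ∃ p, p = B⁻¹ *ᵥ (l - ls) := ⟨_, rfl⟩
  obtain ⟨q, hq⟩ : ∃ q, q = B⁻¹ *ᵥ (lp - ls) := ⟨_, rfl⟩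
  have ha : l - ls = B *ᵥ p := by simp [hp, mulVec_mulVec, mul_nonsing_inv _ hu]
  have hb : lp - ls = B *ᵥ q := by simp [hq, mulVec_mulVec, mul_nonsing_inv _ hu]
  have hpq : B⁻¹ *ᵥ (lp - l) = q - p := by
    rw [hp, hq, ← mulVec_sub]; congr 1; abel
  obtain ⟨u, hu'⟩ : ∃ u, u = z - zs := ⟨_, rfl⟩
  obtain ⟨v, hv'⟩ : ∃ v, v = zp - zs := ⟨_, rfl⟩
  have e1 : x - z = (1 / 2 : ℝ) • (q - p + v - u) := by
    rw [hx, hpq, hu', hv']; ext j; simp; ring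
  have e2 : x - zs = (1 / 2 : ℝ) • (q - p + v + u) := by
    rw [hx, hpq, hu', hv']; ext j; simp; ring
  rw [← hp, ← hq, e1, e2, ha, hb, ← hu', ← hv', dotProduct_comm v, dotProduct_comm u]
  simp only [mulVec_smul, mulVec_add, mulVec_sub, add_dotProduct, sub_dotProduct, dotProduct_add,
    dotProduct_sub, smul_dotProduct, dotProduct_smul, smul_eq_mul]
  rw [sym q p, sym v p, sym u p, sym v q, sym u q, sym u v]
  ring

/-- Let `B₁, …, B_N` be symmetric positive definite matrices and suppose
`xᵢ⁺ = ½ Bᵢ⁻¹(λᵢ⁺ − λᵢ) + ½(z + z⁺)` for each `i`, with `Σᵢ λᵢ = Σᵢ λᵢ⁺ = Σᵢ λᵢ* = 0`. Then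
`Σᵢ (λᵢ − λᵢ* + Bᵢ(xᵢ⁺ − z))ᵀ(xᵢ⁺ − z*)
  = ¼ Σᵢ (‖λᵢ⁺ − λᵢ*‖²_{Bᵢ⁻¹} − ‖λᵢ − λᵢ*‖²_{Bᵢ⁻¹}) + ¼ Σᵢ (‖z⁺ − z*‖²_{Bᵢ} − ‖z − z*‖²_{Bᵢ})`. -/
theorem stmt_4 {n N : ℕ} (hN : 0 < N)
    (B : Fin N → Matrix (Fin n) (Fin n) ℝ)
    (hB : ∀ i, (B i).PosDef)
    (xp lam lamp lamstar : Fin N → Fin n → ℝ)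
    (z zp zstar : Fin n → ℝ)
    (hx : ∀ i, xp i = (1 / 2 : ℝ) • ((B i)⁻¹ *ᵥ (lamp i - lam i)) + (1 / 2 : ℝ) • (z + zp))
    (h1 : ∑ i, lam i = 0) (h2 : ∑ i, lamp i = 0) (h3 : ∑ i, lamstar i = 0) :
    ∑ i, ((lam i - lamstar i + (B i) *ᵥ (xp i - z)) ⬝ᵥ (xp i - zstar))
      = (1 / 4 : ℝ) * ∑ i, ((lamp i - lamstar i) ⬝ᵥ ((B i)⁻¹ *ᵥ (lamp i - lamstar i))
          - (lam i - lamstar i) ⬝ᵥ ((B i)⁻¹ *ᵥ (lam i - lamstar i)))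
        + (1 / 4 : ℝ) * ∑ i, ((zp - zstar) ⬝ᵥ ((B i) *ᵥ (zp - zstar))
          - (z - zstar) ⬝ᵥ ((B i) *ᵥ (z - zstar))) := by
  have c1 : ∑ i, (lam i - lamstar i) ⬝ᵥ (z - zstar) = 0 := by
    rw [← sum_dotProduct, Finset.sum_sub_distrib, h1, h3]; simp
  have c2 : ∑ i, (lamp i - lamstar i) ⬝ᵥ (zp - zstar) = 0 := by
    rw [← sum_dotProduct, Finset.sum_sub_distrib, h2, h3]; simp
  rw [Finset.sum_congr rfl fun i _ => aux_term (B i) (hB i) _ _ _ (lamstar i) z zp zstar (hx i)]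
  rw [Finset.sum_add_distrib, Finset.sum_add_distrib, ← Finset.mul_sum, ← Finset.mul_sum,
    ← Finset.mul_sum, Finset.sum_add_distrib (f := fun i => (lam i - lamstar i) ⬝ᵥ (z - zstar)),
    c1, c2]
  ring
end

section
/- Let f : ℝⁿ → ℝ be differentiable and m-strongly convex with m > 0, B a symmetric positive definite n×n matrix, and λ, z ∈ ℝⁿ. If x⁺ is the global minimizer of x ↦ f(x) + λᵀx + ½‖x − z‖²_B, then for every y ∈ ℝⁿ, f(x⁺) − f(y) ≤ (λ + B(x⁺ − z))ᵀ(y − x⁺) − (m/2)‖x⁺ − y‖². -/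
open Matrix

/-- Let `f : ℝⁿ → ℝ` be differentiable and `m`-strongly convex (`m > 0`),
`B` symmetric positive definite, and `λ, z ∈ ℝⁿ`. If `x⁺` is the global minimizer of
`x ↦ f(x) + λᵀx + ½‖x − z‖²_B`, then for every `y`,
`f(x⁺) − f(y) ≤ (λ + B(x⁺ − z))ᵀ(y − x⁺) − (m/2)‖x⁺ − y‖²`. -/
theorem stmt_10 {n : ℕ} (m : ℝ) (hm : 0 < m)
    (f : (Fin n → ℝ) → ℝ) (gradf : (Fin n → ℝ) → (Fin n → ℝ))
    (hdiff : Differentiable ℝ f)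
    (hgrad : ∀ x y, fderiv ℝ f x y = gradf x ⬝ᵥ y)
    -- m-strong convexity: f(y) ≥ f(x) + ∇f(x)ᵀ(y − x) + (m/2)‖y − x‖²
    (hsc : ∀ x y, f x + gradf x ⬝ᵥ (y - x) + m / 2 * ((y - x) ⬝ᵥ (y - x)) ≤ f y)
    (B : Matrix (Fin n) (Fin n) ℝ) (hB : B.PosDef)
    (lam z xp : Fin n → ℝ)
    (hxp : ∀ x, f xp + lam ⬝ᵥ xp + (1 / 2 : ℝ) * ((xp - z) ⬝ᵥ (B *ᵥ (xp - z)))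
        ≤ f x + lam ⬝ᵥ x + (1 / 2 : ℝ) * ((x - z) ⬝ᵥ (B *ᵥ (x - z)))) :
    ∀ y, f xp - f y ≤ (lam + B *ᵥ (xp - z)) ⬝ᵥ (y - xp)
        - m / 2 * ((xp - y) ⬝ᵥ (xp - y)) := by
  intro y
  set d := y - xp with hd
  have hsym : (xp - z) ⬝ᵥ (B *ᵥ d) = (B *ᵥ (xp - z)) ⬝ᵥ d := by
    have hT : Bᵀ = B := by
      have h := hB.isHermitian
      rwa [Matrix.IsHermitian, Matrix.conjTranspose_eq_transpose_of_trivial] at h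
    rw [Matrix.dotProduct_mulVec, ← Matrix.mulVec_transpose, hT]
  have hcomm : d ⬝ᵥ (B *ᵥ (xp - z)) = (B *ᵥ (xp - z)) ⬝ᵥ d := dotProduct_comm _ _
  have hline : HasDerivAt (fun t : ℝ => xp + t • d) d 0 := by
    simpa using ((hasDerivAt_id (0 : ℝ)).smul_const d).const_add xp
  have hf : HasDerivAt (fun t : ℝ => f (xp + t • d)) (gradf xp ⬝ᵥ d) 0 := by
    have h0 : HasFDerivAt f (fderiv ℝ f xp) (xp + (0 : ℝ) • d) := by
      simpa using (hdiff xp).hasFDerivAt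
    have h := h0.comp_hasDerivAt (0 : ℝ) hline
    rw [hgrad] at h
    exact h
  have hq : HasDerivAt (fun t : ℝ => t * ((lam + B *ᵥ (xp - z)) ⬝ᵥ d)
      + t ^ 2 * ((1 / 2 : ℝ) * (d ⬝ᵥ (B *ᵥ d)))) ((lam + B *ᵥ (xp - z)) ⬝ᵥ d) 0 := by
    have h := ((hasDerivAt_id (0 : ℝ)).mul_const ((lam + B *ᵥ (xp - z)) ⬝ᵥ d)).add
      (((hasDerivAt_id (0 : ℝ)).pow 2).mul_const ((1 / 2 : ℝ) * (d ⬝ᵥ (B *ᵥ d))))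
    exact h.congr_deriv (by simp)
  have hmin : IsLocalMin (fun t : ℝ => f (xp + t • d) + (t * ((lam + B *ᵥ (xp - z)) ⬝ᵥ d)
      + t ^ 2 * ((1 / 2 : ℝ) * (d ⬝ᵥ (B *ᵥ d))))) 0 := by
    refine Filter.Eventually.of_forall fun t => ?_
    have h := hxp (xp + t • d)
    have e : xp + t • d - z = (xp - z) + t • d := by abel
    rw [e] at h
    simp only [Matrix.mulVec_add, Matrix.mulVec_smul, dotProduct_add, add_dotProduct,
      smul_dotProduct, dotProduct_smul, smul_eq_mul, hsym, hcomm] at h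
    simp only [zero_smul, add_zero, add_dotProduct]
    nlinarith [h]
  have hz := hmin.hasDerivAt_eq_zero (hf.add hq)
  have h := hsc xp y
  have e : (xp - y) ⬝ᵥ (xp - y) = d ⬝ᵥ d := by
    rw [← neg_sub y xp, neg_dotProduct_neg]
  rw [e]
  rw [← hd] at h
  linarith
end

section
/- Let f_1, …, f_N : ℝⁿ → ℝ be differentiable and m-strongly convex with m > 0, (z*, λ*) a KKT point of the consensus problem, B_1, …, B_N symmetric positive definite n×n matrices, and λ_1, …, λ_N, z ∈ ℝⁿ. For each i let x_i⁺ be the global minimizer of x ↦ f_i(x) + λ_iᵀx + ½‖x − z‖²_{B_i}. Then Σ_{i=1}^N (λ_i − λ_i* + B_i(x_i⁺ − z))ᵀ(x_i⁺ − z*) ≤ −m Σ_{i=1}^N ‖x_i⁺ − z*‖². -/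
open Matrix Finset

/-- Let `f₁, …, f_N` be differentiable and `m`-strongly convex (`m > 0`),
`(z*, λ*)` a KKT point of the consensus problem, `B₁, …, B_N` symmetric positive definite,
and `λᵢ, z ∈ ℝⁿ`. If each `xᵢ⁺` is the global minimizer of
`x ↦ fᵢ(x) + λᵢᵀx + ½‖x − z‖²_{Bᵢ}`, then
`Σᵢ (λᵢ − λᵢ* + Bᵢ(xᵢ⁺ − z))ᵀ(xᵢ⁺ − z*) ≤ −m Σᵢ ‖xᵢ⁺ − z*‖²`. -/
theorem stmt_12 {n N : ℕ} (hN : 0 < N) (m : ℝ) (hm : 0 < m)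
    (f : Fin N → (Fin n → ℝ) → ℝ)
    (gradf : Fin N → (Fin n → ℝ) → (Fin n → ℝ))
    (hdiff : ∀ i, Differentiable ℝ (f i))
    (hgrad : ∀ i x y, fderiv ℝ (f i) x y = gradf i x ⬝ᵥ y)
    -- m-strong convexity: f(y) ≥ f(x) + ∇f(x)ᵀ(y − x) + (m/2)‖y − x‖²
    (hsc : ∀ i x y, f i x + gradf i x ⬝ᵥ (y - x) + m / 2 * ((y - x) ⬝ᵥ (y - x)) ≤ f i y)
    -- KKT point (z*, λ*)
    (zstar : Fin n → ℝ) (lamstar : Fin N → Fin n → ℝ)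
    (hKKT1 : ∀ i, gradf i zstar + lamstar i = 0)
    (hKKT2 : ∑ i, lamstar i = 0)
    (B : Fin N → Matrix (Fin n) (Fin n) ℝ)
    (hB : ∀ i, (B i).PosDef)
    (lam : Fin N → Fin n → ℝ) (z : Fin n → ℝ)
    (xp : Fin N → Fin n → ℝ)
    (hxp : ∀ i x, f i (xp i) + lam i ⬝ᵥ xp i
          + (1 / 2 : ℝ) * ((xp i - z) ⬝ᵥ ((B i) *ᵥ (xp i - z)))
        ≤ f i x + lam i ⬝ᵥ x + (1 / 2 : ℝ) * ((x - z) ⬝ᵥ ((B i) *ᵥ (x - z)))) :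
    ∑ i, ((lam i - lamstar i + (B i) *ᵥ (xp i - z)) ⬝ᵥ (xp i - zstar))
      ≤ -m * ∑ i, ((xp i - zstar) ⬝ᵥ (xp i - zstar)) := by
  rw [Finset.mul_sum]
  apply Finset.sum_le_sum
  intro i _
  have hsym : ∀ u v : Fin n → ℝ, u ⬝ᵥ (B i *ᵥ v) = v ⬝ᵥ (B i *ᵥ u) := by
    intro u v
    have hT : (B i)ᵀ = B i := by
      have h := (hB i).isHermitian.eq
      rwa [Matrix.conjTranspose_eq_transpose_of_trivial] at h
    rw [Matrix.dotProduct_mulVec, ← Matrix.mulVec_transpose, hT, dotProduct_comm]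
  set d : Fin n → ℝ := xp i - zstar with hd
  set w : Fin n → ℝ := xp i - z with hw
  have hline : HasDerivAt (fun t : ℝ => xp i + t • d) d 0 := by
    simpa using ((hasDerivAt_id (0 : ℝ)).smul_const d).const_add (xp i)
  have hf : HasDerivAt (fun t : ℝ => f i (xp i + t • d)) (gradf i (xp i) ⬝ᵥ d) 0 := by
    have h1 : HasFDerivAt (f i) (fderiv ℝ (f i) (xp i)) (xp i + (0 : ℝ) • d) := by
      simpa using (hdiff i (xp i)).hasFDerivAt
    have h2 := h1.comp_hasDerivAt (0 : ℝ) hline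
    rw [hgrad] at h2
    exact h2
  have hq : HasDerivAt (fun t : ℝ => t * (lam i ⬝ᵥ d + d ⬝ᵥ (B i *ᵥ w))
      + t ^ 2 * ((1 / 2) * (d ⬝ᵥ (B i *ᵥ d)))) (lam i ⬝ᵥ d + d ⬝ᵥ (B i *ᵥ w)) 0 := by
    have h1 := ((hasDerivAt_id (0 : ℝ)).mul_const (lam i ⬝ᵥ d + d ⬝ᵥ (B i *ᵥ w)))
    have h2 := ((hasDerivAt_pow 2 (0 : ℝ)).mul_const ((1 / 2) * (d ⬝ᵥ (B i *ᵥ d))))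
    have h3 := h1.add h2
    refine HasDerivAt.congr_deriv h3 ?_
    simp
  have hmin : IsLocalMin (fun t : ℝ => f i (xp i + t • d)
      + (t * (lam i ⬝ᵥ d + d ⬝ᵥ (B i *ᵥ w)) + t ^ 2 * ((1 / 2) * (d ⬝ᵥ (B i *ᵥ d))))) 0 := by
    refine Filter.Eventually.of_forall fun t => ?_
    have h := hxp i (xp i + t • d)
    have e : xp i + t • d - z = w + t • d := by rw [hw]; abel
    rw [e] at h
    simp only [Matrix.mulVec_add, Matrix.mulVec_smul, dotProduct_add, add_dotProduct,
      dotProduct_smul, smul_dotProduct, smul_eq_mul, hsym w d] at h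
    simp only [zero_smul, add_zero]
    linarith
  have h0 := hmin.hasDerivAt_eq_zero (hf.add hq)
  have s1 := hsc i (xp i) zstar
  have s2 := hsc i zstar (xp i)
  have e : zstar - xp i = -d := by rw [hd]; abel
  rw [e] at s1
  rw [← hd] at s2
  have hk : gradf i zstar = - lamstar i := eq_neg_of_add_eq_zero_left (hKKT1 i)
  rw [hk] at s2
  simp only [dotProduct_neg, neg_dotProduct, neg_neg] at s1 s2
  rw [add_dotProduct, sub_dotProduct, dotProduct_comm (B i *ᵥ w) d]
  linarith
end

section
/- Let f : ℝⁿ → ℝ be differentiable, and let ρ > 0, σ > 0 be such that the function x ↦ f(x) + (ρ/2)‖x‖² is σ-strongly convex. Let z, z*, λ, λ* ∈ ℝⁿ satisfy ∇f(z*) + λ* = 0, and let x⁺ be the global minimizer of x ↦ f(x) + λᵀx + (ρ/2)‖x − z‖². Then ‖x⁺ − z*‖ ≤ (ρ/σ)‖z − z*‖ + (1/σ)‖λ − λ*‖. -/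
open scoped RealInnerProductSpace

/-- Let `f : ℝⁿ → ℝ` be differentiable and `ρ, σ > 0` such that
`x ↦ f(x) + (ρ/2)‖x‖²` is `σ`-strongly convex. Let `∇f(z*) + λ* = 0` and let `x⁺` be the
global minimizer of `x ↦ f(x) + λᵀx + (ρ/2)‖x − z‖²`. Then
`‖x⁺ − z*‖ ≤ (ρ/σ)‖z − z*‖ + (1/σ)‖λ − λ*‖`. -/
theorem stmt_13 {n : ℕ}
    (f : EuclideanSpace ℝ (Fin n) → ℝ)
    (gradf : EuclideanSpace ℝ (Fin n) → EuclideanSpace ℝ (Fin n))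
    (hgrad : ∀ x, HasGradientAt f (gradf x) x)
    (ρ σ : ℝ) (hρ : 0 < ρ) (hσ : 0 < σ)
    -- x ↦ f(x) + (ρ/2)‖x‖² is σ-strongly convex (its gradient is ∇f(x) + ρx)
    (hsc : ∀ x y, f x + ρ / 2 * ‖x‖ ^ 2 + ⟪gradf x + ρ • x, y - x⟫ + σ / 2 * ‖y - x‖ ^ 2
        ≤ f y + ρ / 2 * ‖y‖ ^ 2)
    (z zstar lam lamstar : EuclideanSpace ℝ (Fin n))
    (hstat : gradf zstar + lamstar = 0)
    (xp : EuclideanSpace ℝ (Fin n))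
    (hxp : ∀ x, f xp + ⟪lam, xp⟫ + ρ / 2 * ‖xp - z‖ ^ 2
        ≤ f x + ⟪lam, x⟫ + ρ / 2 * ‖x - z‖ ^ 2) :
    ‖xp - zstar‖ ≤ ρ / σ * ‖z - zstar‖ + 1 / σ * ‖lam - lamstar‖ := by
  have hopt : ∀ v, ⟪gradf xp, v⟫ + ⟪lam, v⟫ + ρ * ⟪xp - z, v⟫ = 0 := by
    intro v
    have h1 := (hgrad xp).hasFDerivAt
    have h2 := (innerSL ℝ lam).hasFDerivAt (x := xp)
    have h3 := ((((hasFDerivAt_id (𝕜 := ℝ) xp).sub_const z).norm_sq).const_mul (ρ / 2))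
    have h4 := (h1.add h2).add h3
    have hmin : IsLocalMin (fun x => f x + ⟪lam, x⟫ + ρ / 2 * ‖x - z‖ ^ 2) xp := Filter.Eventually.of_forall hxp
    have h5 := hmin.hasFDerivAt_eq_zero h4
    have h6 := congrArg (fun L => L v) h5
    simp at h6
    simp only [inner_sub_left]
    linarith
  have h1 := hsc xp zstar
  have h2 := hsc zstar xp
  have h3 := hopt (xp - zstar)
  have hg : gradf zstar = -lamstar := eq_neg_of_add_eq_zero_left hstat
  have e : zstar - xp = -(xp - zstar) := by abel
  rw [e, norm_neg, inner_neg_right, inner_add_left, real_inner_smul_left] at h1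
  rw [hg, inner_add_left, real_inner_smul_left, inner_neg_left] at h2
  have c1 := real_inner_le_norm (z - zstar) (xp - zstar)
  have c2 := (abs_le.mp (abs_real_inner_le_norm (lam - lamstar) (xp - zstar))).1
  rw [inner_sub_left] at h3 c1 c2
  have c3 := mul_le_mul_of_nonneg_left c1 hρ.le
  have key : σ * ‖xp - zstar‖ * ‖xp - zstar‖ ≤
      (ρ * ‖z - zstar‖ + ‖lam - lamstar‖) * ‖xp - zstar‖ := by
    nlinarith
  have e2 : ρ / σ * ‖z - zstar‖ + 1 / σ * ‖lam - lamstar‖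
      = (ρ * ‖z - zstar‖ + ‖lam - lamstar‖) / σ := by field_simp
  rw [e2, le_div_iff₀ hσ]
  rcases (norm_nonneg (xp - zstar)).eq_or_lt with h0 | h0
  · rw [← h0]; simp; positivity
  · have := le_of_mul_le_mul_right key h0
    linarith
end

section
/- Let N ≥ 1 and ρ, σ, γ > 0 with c := (ρ + 1)γ/σ < 1. Let z*, λ_1*, …, λ_N* ∈ ℝⁿ and let sequences z^k, λ_i^k, x_i^{k+1} ∈ ℝⁿ (k = 0, 1, 2, …) satisfy, for every k: (a) σ‖x_i^{k+1} − z*‖ ≤ ρ‖z^k − z*‖ + ‖λ_i^k − λ_i*‖ for every i; (b) N‖z^{k+1} − z*‖ ≤ γ Σ_{i=1}^N ‖x_i^{k+1} − z*‖; and (c) Σ_{i=1}^N ‖λ_i^{k+1} − λ_i*‖ ≤ γ Σ_{i=1}^N ‖x_i^{k+1} − z*‖. Define V^k = (ρN/σ)‖z^k − z*‖ + (1/σ) Σ_{i=1}^N ‖λ_i^k − λ_i*‖. Then V^k ≤ c^k V^0 for all k; in particular z^k → z* and λ_i^k → λ_i* for every i, at a linear rate. -/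
open Finset

/-- Let `N ≥ 1`, `ρ, σ, γ > 0` with `c := (ρ + 1)γ/σ < 1`, and let
sequences `z^k, λᵢ^k, xᵢ^{k+1}` satisfy, for every `k`:
(a) `σ‖xᵢ^{k+1} − z*‖ ≤ ρ‖z^k − z*‖ + ‖λᵢ^k − λᵢ*‖` for every `i`;
(b) `N‖z^{k+1} − z*‖ ≤ γ Σᵢ ‖xᵢ^{k+1} − z*‖`;
(c) `Σᵢ ‖λᵢ^{k+1} − λᵢ*‖ ≤ γ Σᵢ ‖xᵢ^{k+1} − z*‖`.
With `V^k = (ρN/σ)‖z^k − z*‖ + (1/σ) Σᵢ ‖λᵢ^k − λᵢ*‖`, we have `V^k ≤ c^k V^0` for all `k`;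
in particular `z^k → z*` and `λᵢ^k → λᵢ*` for every `i` (at a linear rate). -/
theorem stmt_15 {n N : ℕ} (hN : 0 < N)
    (ρ σ γ c : ℝ) (hρ : 0 < ρ) (hσ : 0 < σ) (hγ : 0 < γ)
    (hc : c = (ρ + 1) * γ / σ) (hc1 : c < 1)
    (zstar : EuclideanSpace ℝ (Fin n))
    (lamstar : Fin N → EuclideanSpace ℝ (Fin n))
    (z : ℕ → EuclideanSpace ℝ (Fin n))
    (lam : ℕ → Fin N → EuclideanSpace ℝ (Fin n))
    (x : ℕ → Fin N → EuclideanSpace ℝ (Fin n))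
    (ha : ∀ k i, σ * ‖x (k + 1) i - zstar‖ ≤ ρ * ‖z k - zstar‖ + ‖lam k i - lamstar i‖)
    (hb : ∀ k, (N : ℝ) * ‖z (k + 1) - zstar‖ ≤ γ * ∑ i, ‖x (k + 1) i - zstar‖)
    (hcc : ∀ k, ∑ i, ‖lam (k + 1) i - lamstar i‖ ≤ γ * ∑ i, ‖x (k + 1) i - zstar‖)
    (V : ℕ → ℝ)
    (hV : ∀ k, V k = ρ * N / σ * ‖z k - zstar‖ + 1 / σ * ∑ i, ‖lam k i - lamstar i‖) :
    (∀ k, V k ≤ c ^ k * V 0)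
    ∧ Filter.Tendsto z Filter.atTop (nhds zstar)
    ∧ ∀ i, Filter.Tendsto (fun k => lam k i) Filter.atTop (nhds (lamstar i)) := by
  have hN' : (0 : ℝ) < N := by exact_mod_cast hN
  have hc0 : 0 ≤ c := by rw [hc]; positivity
  have hσV : ∀ k, σ * V k = ρ * (N * ‖z k - zstar‖) + ∑ i, ‖lam k i - lamstar i‖ := by
    intro k
    rw [hV]
    field_simp
  have hS : ∀ k, ∑ i, ‖x (k + 1) i - zstar‖ ≤ V k := by
    intro k
    have h : σ * ∑ i, ‖x (k + 1) i - zstar‖ ≤ σ * V k := by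
      rw [hσV, Finset.mul_sum]
      refine (Finset.sum_le_sum fun i _ => ha k i).trans (le_of_eq ?_)
      rw [Finset.sum_add_distrib]
      simp
      ring
    exact le_of_mul_le_mul_left h hσ
  have hstep : ∀ k, V (k + 1) ≤ c * V k := by
    intro k
    have hcσ : σ * c = (ρ + 1) * γ := by rw [hc]; field_simp
    have h : σ * V (k + 1) ≤ σ * (c * V k) := by
      rw [hσV, ← mul_assoc σ c, hcσ]
      have h1 := mul_le_mul_of_nonneg_left (hb k) hρ.le
      have h2 := hcc k
      have h3 := mul_le_mul_of_nonneg_left (hS k) (by positivity : 0 ≤ (ρ + 1) * γ)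
      linarith
    exact le_of_mul_le_mul_left h hσ
  have hmain : ∀ k, V k ≤ c ^ k * V 0 := by
    intro k
    induction k with
    | zero => simp
    | succ k ih =>
      calc V (k + 1) ≤ c * V k := hstep k
        _ ≤ c * (c ^ k * V 0) := mul_le_mul_of_nonneg_left ih hc0
        _ = c ^ (k + 1) * V 0 := by ring
  have hlim : ∀ a : ℝ, Filter.Tendsto (fun k => a * (c ^ k * V 0)) Filter.atTop (nhds 0) := by
    intro a
    have := ((tendsto_pow_atTop_nhds_zero_of_lt_one hc0 hc1).mul_const (V 0)).const_mul a
    simpa using this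
  have hsum : ∀ k, 0 ≤ ∑ i, ‖lam k i - lamstar i‖ := fun k =>
    Finset.sum_nonneg fun i _ => norm_nonneg _
  refine ⟨hmain, ?_, ?_⟩
  · rw [tendsto_iff_norm_sub_tendsto_zero]
    refine squeeze_zero (fun k => norm_nonneg _) (fun k => ?_) (hlim (σ / (ρ * N)))
    rw [div_mul_eq_mul_div, le_div_iff₀ (by positivity)]
    have h1 := mul_le_mul_of_nonneg_left (hmain k) hσ.le
    have h2 := hσV k
    have h3 := hsum k
    linarith
  · intro i
    rw [tendsto_iff_norm_sub_tendsto_zero]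
    refine squeeze_zero (fun k => norm_nonneg _) (fun k => ?_) (hlim σ)
    have h1 := mul_le_mul_of_nonneg_left (hmain k) hσ.le
    have h2 := hσV k
    have h3 : ‖lam k i - lamstar i‖ ≤ ∑ i, ‖lam k i - lamstar i‖ :=
      Finset.single_le_sum (f := fun i => ‖lam k i - lamstar i‖)
        (fun i _ => norm_nonneg _) (Finset.mem_univ i)
    have h4 : 0 ≤ ρ * (N * ‖z k - zstar‖) := by positivity
    linarith
end

section
/- Let ρ > 0 and x_1, …, x_N, λ_1, …, λ_N ∈ ℝⁿ with N ≥ 1. The function z ↦ Σ_{i=1}^N ((ρ/2)‖x_i − z‖² − λ_iᵀ z) has unique global minimizer z̄ = (1/N) Σ_{i=1}^N (x_i + λ_i/ρ). In particular, if λ_i = −g_i for given g_1, …, g_N ∈ ℝⁿ, then z̄ = (1/N) Σ_{i=1}^N (x_i − g_i/ρ), so the Consensus ADMM global aggregation step coincides with the Reduced Consensus ALADIN global update. -/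
open Matrix Finset

/-- For `ρ > 0` and `x₁, …, x_N, λ₁, …, λ_N ∈ ℝⁿ` (`N ≥ 1`), the function
`z ↦ Σᵢ ((ρ/2)‖xᵢ − z‖² − λᵢᵀ z)` has unique global minimizer
`z̄ = (1/N) Σᵢ (xᵢ + λᵢ/ρ)`. In particular, if `λᵢ = −gᵢ` then
`z̄ = (1/N) Σᵢ (xᵢ − gᵢ/ρ)`: the Consensus ADMM aggregation step coincides with the
Reduced Consensus ALADIN global update. -/
theorem stmt_16 {n N : ℕ} (hN : 0 < N) (ρ : ℝ) (hρ : 0 < ρ)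
    (x lam : Fin N → Fin n → ℝ)
    (φ : (Fin n → ℝ) → ℝ)
    (hφ : ∀ z, φ z = ∑ i, (ρ / 2 * ((x i - z) ⬝ᵥ (x i - z)) - lam i ⬝ᵥ z))
    (zbar : Fin n → ℝ)
    (hzbar : zbar = ((N : ℝ)⁻¹) • ∑ i, (x i + ρ⁻¹ • lam i)) :
    (∀ z, φ zbar ≤ φ z)
    ∧ (∀ z, φ z ≤ φ zbar → z = zbar)
    ∧ ∀ g : Fin N → Fin n → ℝ, (∀ i, lam i = -g i) →
        zbar = ((N : ℝ)⁻¹) • ∑ i, (x i - ρ⁻¹ • g i) := by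
  have hN' : (N : ℝ) ≠ 0 := by positivity
  have hsum : ∑ i, (ρ • (x i - zbar) + lam i) = 0 := by
    have h1 : (N : ℝ) • zbar = ∑ i, (x i + ρ⁻¹ • lam i) := by
      rw [hzbar, smul_smul, mul_inv_cancel₀ hN', one_smul]
    have h2 : ∀ i, ρ • (x i - zbar) + lam i = ρ • ((x i + ρ⁻¹ • lam i) - zbar) := by
      intro i
      ext j
      simp
      field_simp
      ring
    rw [Finset.sum_congr rfl (fun i _ => h2 i), ← Finset.smul_sum, Finset.sum_sub_distrib, ← h1]
    simp [← Nat.cast_smul_eq_nsmul ℝ]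
  have key : ∀ z, φ z = φ zbar + N * (ρ / 2) * ((z - zbar) ⬝ᵥ (z - zbar)) := by
    intro z
    have h3 : ∀ i, (ρ / 2 * ((x i - z) ⬝ᵥ (x i - z)) - lam i ⬝ᵥ z)
        = (ρ / 2 * ((x i - zbar) ⬝ᵥ (x i - zbar)) - lam i ⬝ᵥ zbar)
          + ρ / 2 * ((z - zbar) ⬝ᵥ (z - zbar))
          - (ρ • (x i - zbar) + lam i) ⬝ᵥ (z - zbar) := by
      intro i
      simp only [sub_dotProduct, dotProduct_sub, add_dotProduct, smul_dotProduct, smul_eq_mul]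
      rw [dotProduct_comm z (x i), dotProduct_comm zbar (x i), dotProduct_comm zbar z]
      ring
    rw [hφ, hφ, Finset.sum_congr rfl (fun i _ => h3 i), Finset.sum_sub_distrib,
      Finset.sum_add_distrib, ← sum_dotProduct, hsum]
    simp
    ring
  have hc : 0 < (N : ℝ) * (ρ / 2) := by positivity
  have hnn : ∀ v : Fin n → ℝ, 0 ≤ v ⬝ᵥ v := fun v =>
    Finset.sum_nonneg (fun i _ => mul_self_nonneg _)
  refine ⟨fun z => ?_, fun z hz => ?_, fun g hg => ?_⟩
  · rw [key z]
    have := mul_nonneg hc.le (hnn (z - zbar))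
    linarith
  · rw [key z] at hz
    have h0 : (z - zbar) ⬝ᵥ (z - zbar) = 0 := by
      refine le_antisymm ?_ (hnn _)
      by_contra! h
      have := mul_pos hc h
      linarith
    exact sub_eq_zero.mp (dotProduct_self_eq_zero.mp h0)
  · rw [hzbar]
    simp [hg, sub_eq_add_neg]
end
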